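/- Let M be a symmetric matrix with entries in {0,1,*}, indexed by a 3-element set D, such that M is impure (M contains at least one 0 entry and at least one 1 entry) and no principal 2×2 submatrix of M has exactly three entries equal to * (i.e., for no two distinct i,j ∈ D does the 2×2 submatrix M|_{{i,j}×{i,j}} contain exactly three *s). Then M has no derectangularising sequence. -/

import Mathlib

/-- The three possible entries `0`, `1`, `*` of a matrix-partition matrix. -/
inductive Entry : Type
  | zero | one | star
deriving DecidableEq

/-- `hrel M X Y` is the relation `H^M_{X,Y} = {(i,j) ∈ X × Y : M i j = *}`. -/
def hrel {D : Type} (M : D → D → Entry) (X Y : Set D) : Set (D × D) :=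
  {p | p.1 ∈ X ∧ p.2 ∈ Y ∧ M p.1 p.2 = Entry.star}

/-- Composition of relations: `R ∘ S = {(x,z) : ∃ y, (x,y) ∈ R ∧ (y,z) ∈ S}`. -/
def relComp {D : Type} (R S : Set (D × D)) : Set (D × D) :=
  {p | ∃ y, (p.1, y) ∈ R ∧ (y, p.2) ∈ S}

/-- A relation `R ⊆ A × B` is rectangular if `(i,i'),(i,j'),(j,i') ∈ R ⟹ (j,j') ∈ R`. -/
def Rectangular {A B : Type} (R : Set (A × B)) : Prop :=
  ∀ i j i' j', (i, i') ∈ R → (i, j') ∈ R → (j, i') ∈ R → (j, j') ∈ R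

/-- The submatrix `M|_{X×Y}` is pure if it contains no `0` or contains no `1`. -/
def IsPure {D : Type} (M : D → D → Entry) (X Y : Set D) : Prop :=
  (∀ i ∈ X, ∀ j ∈ Y, M i j ≠ Entry.zero) ∨ (∀ i ∈ X, ∀ j ∈ Y, M i j ≠ Entry.one)

/-- The composed relation `H^M_{D₁,D₂} ∘ H^M_{D₂,D₃} ∘ ⋯ ∘ H^M_{D_{k−1},D_k}`
of a sequence of subsets of `D`. -/
def relChain {D : Type} (M : D → D → Entry) : List (Set D) → Set (D × D)
  | [] => ∅
  | [X] => {p | p.1 = p.2 ∧ p.1 ∈ X}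
  | X :: Y :: rest => relComp (hrel M X Y) (relChain M (Y :: rest))

/-- `L = D₁, …, D_k` is a derectangularising sequence of `M`: `k ≥ 2`, every
`M|_{D_i × D_j}` is pure, and the composed relation is not rectangular. -/
def IsDerect {D : Type} (M : D → D → Entry) (L : List (Set D)) : Prop :=
  2 ≤ L.length ∧ (∀ X ∈ L, ∀ Y ∈ L, IsPure M X Y) ∧ ¬ Rectangular (relChain M L)


theorem chain_head {D : Type} (M : D → D → Entry) (X : Set D) (L : List (Set D)) (x z : D)
    (h : (x, z) ∈ relChain M (X :: L)) : x ∈ X := by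
  cases L with
  | nil => exact h.2
  | cons Y L => obtain ⟨y, h1, _⟩ := h; exact h1.1

theorem chain_sim {D : Type} (M : D → D → Entry) (hsym : ∀ i j, M i j = M j i)
    (hr : ∀ i j i' j', M i i' = Entry.star → M i j' = Entry.star → M j i' = Entry.star →
      M j j' = Entry.star) (L : List (Set D)) :
    ∀ x x' z : D, (x, z) ∈ relChain M L → (x', z) ∈ relChain M L →
      x = x' ∨ ∃ w, M x w = Entry.star ∧ M x' w = Entry.star := by
  induction L with
  | nil => intro x x' z h; exact absurd h (by simp [relChain])
  | cons X L ih =>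
    cases L with
    | nil => intro x x' z h h'; left; exact h.1.trans h'.1.symm
    | cons Y L =>
      rintro x x' z ⟨y, h1, h2⟩ ⟨y', h1', h2'⟩
      right
      have e1 : M x y = Entry.star := h1.2.2
      have e2 : M x' y' = Entry.star := h1'.2.2
      rcases ih y y' z h2 h2' with rfl | ⟨w, hw, hw'⟩
      · exact ⟨y, e1, e2⟩
      · refine ⟨y', ?_, e2⟩
        rw [hsym]
        exact hr y y' w x hw (by rw [hsym]; exact e1) hw'

theorem rect_chain {D : Type} (M : D → D → Entry) (hsym : ∀ i j, M i j = M j i)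
    (hr : ∀ i j i' j', M i i' = Entry.star → M i j' = Entry.star → M j i' = Entry.star →
      M j j' = Entry.star) (X Y : Set D) (L : List (Set D)) :
    Rectangular (relChain M (X :: Y :: L)) := by
  intro i j i' j' h1 h2 h3
  rcases chain_sim M hsym hr _ i j i' h1 h3 with rfl | ⟨w, hw, hw'⟩
  · exact h2
  · obtain ⟨y, g1, g2⟩ := h2
    exact ⟨y, ⟨chain_head M X _ _ _ h3, g1.2.1, hr i j w y hw g1.2.2 hw'⟩, g2⟩

/-- Either a partial injection or a product set. -/
def Good {D : Type} (R : Set (D × D)) : Prop :=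
  ((∀ x y y', (x, y) ∈ R → (x, y') ∈ R → y = y') ∧
    (∀ x x' y, (x, y) ∈ R → (x', y) ∈ R → x = x')) ∨
  (∀ x y x' y', (x, y) ∈ R → (x', y') ∈ R → (x, y') ∈ R)

theorem Good.rect {D : Type} {R : Set (D × D)} (h : Good R) : Rectangular R := by
  intro i j i' j' h1 h2 h3
  rcases h with ⟨_, h⟩ | h
  · have := h i j i' h1 h3
    exact this ▸ h2
  · exact h _ _ _ _ h3 h2

theorem Good.comp {D : Type} {R S : Set (D × D)} (h : Good R) (h' : Good S) :
    Good (relComp R S) := by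
  rcases h with ⟨a, b⟩ | h
  · rcases h' with ⟨a', b'⟩ | h'
    · left
      constructor
      · rintro x z z' ⟨y, h1, h2⟩ ⟨y', h3, h4⟩
        obtain rfl := a _ _ _ h1 h3
        exact a' _ _ _ h2 h4
      · rintro x x' z ⟨y, h1, h2⟩ ⟨y', h3, h4⟩
        obtain rfl := b' _ _ _ h2 h4
        exact b _ _ _ h1 h3
    · right
      rintro x z x' z' ⟨y, h1, h2⟩ ⟨y', h3, h4⟩
      exact ⟨y, h1, h' _ _ _ _ h2 h4⟩
  · right
    rintro x z x' z' ⟨y, h1, h2⟩ ⟨y', h3, h4⟩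
    exact ⟨y', h _ _ _ _ h1 h3, h4⟩

theorem good_chain {D : Type} (M : D → D → Entry) (L : List (Set D))
    (h : ∀ X ∈ L, ∀ Y ∈ L, Good (hrel M X Y)) : Good (relChain M L) := by
  induction L with
  | nil => right; intro x y x' y' h; exact absurd h (by simp [relChain])
  | cons X L ih =>
    cases L with
    | nil =>
      left
      exact ⟨fun x y y' h h' => h.1.symm.trans h'.1, fun x x' y h h' => h.1.trans h'.1.symm⟩
    | cons Y L =>
      exact Good.comp (h X (by simp) Y (by simp))
        (ih fun X' hX Y' hY => h X' (List.mem_cons_of_mem _ hX) Y' (List.mem_cons_of_mem _ hY))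

theorem good_hrel {D : Type} (M : D → D → Entry) (a b c : D) (hc : ∀ x, x = a ∨ x = b ∨ x = c)
    (ht : ∀ x y, M x y = Entry.star ↔ x ≠ y)
    (ha : M a a = Entry.zero) (hb : M b b = Entry.one) (X Y : Set D)
    (hX : IsPure M X X) (hY : IsPure M Y Y) : Good (hrel M X Y) := by
  have key : ∀ Z, IsPure M Z Z → ∀ x ∈ Z, ∀ y ∈ Z, M x x = M y y := by
    intro Z hZ x hx y hy
    have h1 : M x x ≠ Entry.star := by simp [ht]
    have h2 : M y y ≠ Entry.star := by simp [ht]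
    rcases hZ with h | h <;> have := h x hx x hx <;> have := h y hy y hy <;>
      cases hxx : M x x <;> cases hyy : M y y <;> simp_all
  have kX := key X hX
  have kY := key Y hY
  by_cases sX : X.Subsingleton
  · right
    rintro x y x' y' ⟨h1, h2, h3⟩ ⟨h4, h5, h6⟩
    obtain rfl := sX h1 h4
    exact ⟨h1, h5, h6⟩
  by_cases sY : Y.Subsingleton
  · right
    rintro x y x' y' ⟨h1, h2, h3⟩ ⟨h4, h5, h6⟩
    obtain rfl := sY h2 h5
    exact ⟨h1, h2, h3⟩
  left
  simp only [Set.not_subsingleton_iff] at sX sY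
  obtain ⟨p, hp, q, hq, hpq⟩ := sX
  obtain ⟨r, hr, s, hs, hrs⟩ := sY
  have hpq' := kX p hp q hq
  have hrs' := kY r hr s hs
  have pair : ∀ p q, p ≠ q → M p p = M q q → M p p = M c c := by
    intro p q h h'
    rcases hc p with rfl | rfl | rfl <;> rcases hc q with rfl | rfl | rfl <;> simp_all
  have three : ∀ x y z, M x x = M c c → M y y = M c c → M z z = M c c → x ≠ y → x ≠ z → y = z := by
    intro x y z h1 h2 h3 h4 h5
    clear hpq hrs hpq' hrs' ht key kX kY pair
    rcases hc x with rfl | rfl | rfl <;> rcases hc y with rfl | rfl | rfl <;>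
      rcases hc z with rfl | rfl | rfl <;>
      first | rfl | (exfalso; simp_all; done) |
        (exfalso; have := h2.trans h3.symm; rw [ha, hb] at this; cases this) |
        (exfalso; have := h2.trans h3.symm; rw [hb, ha] at this; cases this)
  have gX : ∀ x ∈ X, M x x = M c c := fun x hx => (kX x hx p hp).trans (pair p q hpq hpq')
  have gY : ∀ x ∈ Y, M x x = M c c := fun x hx => (kY x hx r hr).trans (pair r s hrs hrs')
  constructor
  · rintro x y y' ⟨h1, h2, h3⟩ ⟨h4, h5, h6⟩
    exact three x y y' (gX x h1) (gY y h2) (gY y' h5) ((ht _ _).1 h3) ((ht _ _).1 h6)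
  · rintro x x' y ⟨h1, h2, h3⟩ ⟨h4, h5, h6⟩
    exact three y x x' (gY y h2) (gX x h1) (gX x' h4) ((ht _ _).1 h3).symm ((ht _ _).1 h6).symm

theorem tri {D : Type} (hD : ∀ p q r x : D, p ≠ q → p ≠ r → q ≠ r → x = p ∨ x = q ∨ x = r)
    (M : D → D → Entry) (hsym : ∀ i j, M i j = M j i)
    (h0 : ∃ i j, M i j = Entry.zero) (h1 : ∃ i j, M i j = Entry.one)
    (hl : ∀ i j, M i j = Entry.star → (M i i = Entry.star ↔ M j j = Entry.star))
    (i j i' j' : D) (e1 : M i i' = Entry.star) (e2 : M i j' = Entry.star)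
    (e3 : M j i' = Entry.star) (e4 : M j j' ≠ Entry.star) :
    ∀ x y, M x y = Entry.star ↔ x ≠ y := by
  have l1 := hl _ _ e1
  have l2 := hl _ _ e2
  have l3 := hl _ _ e3
  have nij : i ≠ j := by rintro rfl; exact e4 e2
  have nij' : i' ≠ j' := by rintro rfl; exact e4 e3
  by_cases hi : M i i = Entry.star
  · exfalso
    have hjj' : j ≠ j' := by grind
    -- all entries except j j' are star
    have : ∃ k, k ≠ j ∧ k ≠ j' ∧ M k j = Entry.star ∧ M k j' = Entry.star ∧ M k k = Entry.star := by
      by_cases h : i = j'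
      · exact ⟨i', by grind, by grind, by grind, by grind, by grind⟩
      · by_cases h' : i' = j
        · exact ⟨i, by grind, by grind, by grind, by grind, by grind⟩
        · have := hD i j j' i' nij h hjj'
          exact ⟨i, by grind, by grind, by grind, by grind, by grind⟩
    obtain ⟨k, k1, k2, k3, k4, k5⟩ := this
    have all := fun x => hD k j j' x k1 k2 hjj'
    have s1 : M j j = Entry.star := by grind
    have s2 : M j' j' = Entry.star := by grind
    have v : ∀ x y, M x y = Entry.star ∨ M x y = M j j' := by
      intro x y
      rcases all x with rfl | rfl | rfl <;> rcases all y with rfl | rfl | rfl <;> grind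
    obtain ⟨x, y, hx⟩ := h0
    obtain ⟨z, w, hz⟩ := h1
    have := v x y
    have := v z w
    grind
  · have n1 : i ≠ i' := by grind
    have n2 : j ≠ i' := by grind
    have n3 : i ≠ j' := by grind
    have all := fun x => hD i j i' x nij n1 n2
    have : j' = j := by have := all j'; grind
    subst this
    intro x y
    rcases all x with rfl | rfl | rfl <;> rcases all y with rfl | rfl | rfl <;> grind

theorem stmt4 {D : Type} [Fintype D] (hD : Fintype.card D = 3)
    (M : D → D → Entry) (hsym : ∀ i j, M i j = M j i)
    (h0 : ∃ i j, M i j = Entry.zero) (h1 : ∃ i j, M i j = Entry.one)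
    (hno : ∀ i j : D, i ≠ j →
      ([M i i, M i j, M j i, M j j].count Entry.star) ≠ 3) :
    ¬ ∃ L : List (Set D), IsDerect M L := by
  rintro ⟨L, hlen, hp, hnr⟩
  have hD' : ∀ p q r x : D, p ≠ q → p ≠ r → q ≠ r → x = p ∨ x = q ∨ x = r := by
    classical
    intro p q r x h1 h2 h3
    have hu : ({p, q, r} : Finset D) = Finset.univ := by
      apply Finset.eq_univ_of_card
      rw [hD, Finset.card_eq_three]
      exact ⟨p, q, r, h1, h2, h3, rfl⟩
    have := Finset.mem_univ x
    rw [← hu] at this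
    simpa using this
  have hl : ∀ i j, M i j = Entry.star → (M i i = Entry.star ↔ M j j = Entry.star) := by
    intro i j h
    by_cases hij : i = j
    · rw [hij]
    · have := hno i j hij
      rw [hsym j i, h] at this
      cases hi : M i i <;> cases hj : M j j <;> simp_all
  by_cases hr : ∀ i j i' j', M i i' = Entry.star → M i j' = Entry.star → M j i' = Entry.star →
      M j j' = Entry.star
  · match L, hlen, hnr with
    | X :: Y :: L, _, hnr => exact hnr (rect_chain M hsym hr X Y L)
  · push Not at hr
    obtain ⟨i, j, i', j', e1, e2, e3, e4⟩ := hr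
    have ht := tri hD' M hsym h0 h1 hl i j i' j' e1 e2 e3 e4
    obtain ⟨a, a', ha⟩ := h0
    obtain ⟨b, b', hb⟩ := h1
    have haa : a = a' := by by_contra h; rw [(ht a a').2 h] at ha; cases ha
    have hbb : b = b' := by by_contra h; rw [(ht b b').2 h] at hb; cases hb
    subst haa hbb
    have hab : a ≠ b := by rintro rfl; rw [ha] at hb; cases hb
    obtain ⟨c, hca, hcb⟩ : ∃ c, c ≠ a ∧ c ≠ b := by
      classical
      have : ∃ c, c ∉ ({a, b} : Finset D) := by
        by_contra h
        push Not at h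
        have h2 := Finset.card_le_card (fun x _ => h x : Finset.univ ⊆ ({a, b} : Finset D))
        have h3 := Finset.card_le_two (a := a) (b := b)
        rw [Finset.card_univ, hD] at h2
        omega
      obtain ⟨c, hc⟩ := this
      exact ⟨c, by simpa using hc⟩
    exact hnr (good_chain M L fun X hX Y hY =>
      good_hrel M a b c (fun x => hD' a b c x hab hca.symm hcb.symm) ht ha hb X Y
        (hp X hX X hX) (hp Y hY Y hY)).rect
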